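/- The positive Munchausen numbers in base 6 are exactly 1, 3164 and 3416; that is, for n ≥ 1, n = P_6(n) if and only if n ∈ {1, 3164, 3416}. -/

import Mathlib

/-- Digit power sum: `P b n = Σ cᵢ^cᵢ` over the base-`b` digits of `n`, with `0^0 = 1`. -/
def P (b n : ℕ) : ℕ := ((Nat.digits b n).map (fun c => c ^ c)).sum

/-- Fuelled version of `P 6`. -/
def fuelP : ℕ → ℕ → ℕ
  | 0, _ => 0
  | k + 1, n => bif Nat.beq n 0 then 0 else (n % 6) ^ (n % 6) + fuelP k (n / 6)

theorem P_zero : P 6 0 = 0 := by simp [P]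

theorem P_step (n : ℕ) (hn : 1 ≤ n) : P 6 n = (n % 6) ^ (n % 6) + P 6 (n / 6) := by
  unfold P
  rw [Nat.digits_def' (by norm_num) hn]
  simp

theorem fuelP_eq (k : ℕ) : ∀ n, n < 6 ^ k → P 6 n = fuelP k n := by
  induction k with
  | zero =>
    intro n h
    have : n = 0 := by simpa using h
    subst this
    simp [P_zero, fuelP]
  | succ k ih =>
    intro n h
    rcases Nat.eq_zero_or_pos n with rfl | hn
    · simp [P_zero, fuelP]
    · have hb : Nat.beq n 0 = false := by
        cases n with
        | zero => omega
        | succ m => rfl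
      rw [P_step n hn, fuelP, hb, ih (n / 6) (by rw [pow_succ] at h; omega)]
      rfl

theorem digit_pow_le (n : ℕ) : (n % 6) ^ (n % 6) ≤ 3125 := by
  have h : n % 6 < 6 := Nat.mod_lt _ (by norm_num)
  interval_cases n % 6 <;> norm_num

theorem P_le (k : ℕ) : ∀ n, n < 6 ^ k → P 6 n ≤ 3125 * k := by
  induction k with
  | zero =>
    intro n h
    have : n = 0 := by simpa using h
    subst this
    simp [P_zero]
  | succ k ih =>
    intro n h
    rcases Nat.eq_zero_or_pos n with rfl | hn
    · simp [P_zero]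
    · have h1 := ih (n / 6) (by rw [pow_succ] at h; omega)
      have h2 := digit_pow_le n
      rw [P_step n hn]
      omega

theorem P_lt (n : ℕ) : 46656 ≤ n → P 6 n < n := by
  induction n using Nat.strong_induction_on with
  | _ n ih =>
    intro h
    have h2 := digit_pow_le n
    rw [P_step n (by omega)]
    by_cases hc : 46656 ≤ n / 6
    · have := ih (n / 6) (by omega) hc
      omega
    · have := P_le 6 (n / 6) (by norm_num; omega)
      omega

theorem finite_check : ∀ a < 136, ∀ b < 138, 138 * a + b = fuelP 6 (138 * a + b) →
    138 * a + b = 0 ∨ 138 * a + b = 1 ∨ 138 * a + b = 3164 ∨ 138 * a + b = 3416 := by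
  decide +kernel

theorem munchausen_base6 (n : ℕ) (hn : 1 ≤ n) :
    n = P 6 n ↔ n ∈ ({1, 3164, 3416} : Set ℕ) := by
  simp only [Set.mem_insert_iff, Set.mem_singleton_iff]
  constructor
  · intro h
    have h1 : n < 46656 := by
      by_contra hc
      have := P_lt n (by omega)
      omega
    have h2 := P_le 6 n (by norm_num; omega)
    have h3 := fuelP_eq 6 n (by norm_num; omega)
    have e : 138 * (n / 138) + n % 138 = n := Nat.div_add_mod n 138
    have := finite_check (n / 138) (by omega) (n % 138) (by omega)
    rw [e] at this
    have := this (h.trans h3)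
    omega
  · rintro (rfl | rfl | rfl) <;> norm_num [P]
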